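/- arXiv:math/0607436 — 6 statements merged into one kernel-verified Lean document; each statement's English description precedes it below -/
import Mathlib

section
/- Let (M, m) be a measure space, let f : M → M be a measurable map such that m(f⁻¹(N)) = 0 for every measurable set N with m(N) = 0, and let T assign to each x ∈ M a set T(x) of positive integers, with the concatenation property: if n ∈ T(x) and k ∈ T(f^n(x)) then n + k ∈ T(x), and such that for every n the set {x : n ∈ T(x)} is measurable. If T(x) is nonempty for m-almost every x, then T(x) is infinite for m-almost every x. -/
open MeasureTheory

/-- Let `(M, m)` be a measure space, `f : M → M` a measurable map whose
preimages preserve null sets, and let `T` assign to each `x ∈ M` a set `T(x)` of positive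
integers with the concatenation property (`n ∈ T(x)` and `k ∈ T(f^n(x))` imply
`n + k ∈ T(x)`) and such that `{x : n ∈ T(x)}` is measurable for every `n`. If `T(x)` is
nonempty for `m`-a.e. `x`, then `T(x)` is infinite for `m`-a.e. `x`. -/
theorem ae_infinite_of_ae_nonempty_concatenation
    {M : Type*} [MeasurableSpace M] (m : Measure M)
    (f : M → M) (hf : Measurable f)
    (hnull : ∀ N : Set M, MeasurableSet N → m N = 0 → m (f ⁻¹' N) = 0)
    (T : M → Set ℕ+)
    (hconc : ∀ (x : M) (n k : ℕ+), n ∈ T x → k ∈ T (f^[(n : ℕ)] x) → n + k ∈ T x)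
    (hmeas : ∀ n : ℕ+, MeasurableSet {x : M | n ∈ T x})
    (hne : ∀ᵐ x ∂m, (T x).Nonempty) :
    ∀ᵐ x ∂m, (T x).Infinite := by
  have hq : Measure.QuasiMeasurePreserving f m m := by
    refine ⟨hf, Measure.AbsolutelyContinuous.mk fun N hN h0 => ?_⟩
    rw [Measure.map_apply hf hN]
    exact hnull N hN h0
  have hall : ∀ᵐ x ∂m, ∀ n : ℕ, (T (f^[n] x)).Nonempty :=
    ae_all_iff.2 fun n => (hq.iterate n).ae hne
  filter_upwards [hall] with x hx hfin
  obtain ⟨n, hn, hmax⟩ := Set.exists_max_image (T x) id hfin (hx 0)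
  obtain ⟨k, hk⟩ := hx n
  have h := hmax _ (hconc x n k hn hk)
  exact absurd h (not_le.2 (PNat.lt_add_right n k))
end

section
/- Let f̂ : [−1,1] → [−1,1] be defined by f̂(x) = 2√x − 1 for x ∈ [0,1] and f̂(x) = 1 − 2√(−x) for x ∈ [−1,0). Then f̂ preserves Lebesgue measure on [−1,1]: the pushforward under f̂ of Lebesgue measure restricted to [−1,1] equals Lebesgue measure restricted to [−1,1]. -/
open MeasureTheory

/-- The "intermittent" circle map on `[-1,1]`: `f̂(x) = 2√x - 1` for `x ≥ 0` and
`f̂(x) = 1 - 2√(-x)` for `x < 0`. -/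
noncomputable def fhat : ℝ → ℝ := fun x =>
  if 0 ≤ x then 2 * Real.sqrt x - 1 else 1 - 2 * Real.sqrt (-x)

lemma fhat_measurable : Measurable fhat := by
  unfold fhat
  exact Measurable.ite measurableSet_Ici (by fun_prop) (by fun_prop)

lemma fhat_mem {x : ℝ} (hx : x ∈ Set.Icc (-1 : ℝ) 1) : fhat x ∈ Set.Icc (-1 : ℝ) 1 := by
  obtain ⟨h1, h2⟩ := hx
  unfold fhat
  split_ifs with h
  · have h3 := Real.sqrt_nonneg x
    have h4 : Real.sqrt x ≤ 1 := Real.sqrt_le_one.mpr h2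
    constructor <;> linarith
  · have h3 := Real.sqrt_nonneg (-x)
    have h4 : Real.sqrt (-x) ≤ 1 := Real.sqrt_le_one.mpr (by linarith)
    constructor <;> linarith

lemma fhat_preimage {a : ℝ} (ha : -1 ≤ a) (ha' : a < 1) :
    fhat ⁻¹' Set.Iic a ∩ Set.Icc (-1 : ℝ) 1 =
      Set.Icc (-1) (-((1 - a) / 2) ^ 2) ∪ Set.Icc 0 (((1 + a) / 2) ^ 2) := by
  have hc : 0 < ((1 - a) / 2) ^ 2 := by
    have : 0 < (1 - a) / 2 := by linarith
    positivity
  have hd : ((1 + a) / 2) ^ 2 ≤ 1 := by nlinarith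
  ext x
  simp only [Set.mem_inter_iff, Set.mem_preimage, Set.mem_Iic, Set.mem_Icc, Set.mem_union]
  unfold fhat
  split_ifs with h
  · have key : 2 * Real.sqrt x - 1 ≤ a ↔ x ≤ ((1 + a) / 2) ^ 2 := by
      rw [← Real.sqrt_le_left (by linarith : 0 ≤ (1 + a) / 2)]
      constructor <;> intro <;> linarith
    rw [key]
    constructor
    · rintro ⟨h1, -⟩
      exact Or.inr ⟨h, h1⟩
    · rintro (⟨_, h2⟩ | ⟨_, h2⟩)
      · linarith
      · exact ⟨h2, by linarith, by linarith⟩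
  · have key : 1 - 2 * Real.sqrt (-x) ≤ a ↔ ((1 - a) / 2) ^ 2 ≤ -x := by
      rw [← Real.le_sqrt' (by linarith : 0 < (1 - a) / 2)]
      constructor <;> intro <;> linarith
    rw [key]
    constructor
    · rintro ⟨h1, h2, -⟩
      exact Or.inl ⟨h2, by linarith⟩
    · rintro (⟨h1, h2⟩ | ⟨h1, h2⟩)
      · exact ⟨by linarith, by linarith, by linarith⟩
      · exact absurd h1 h

/-- The map `f̂` preserves Lebesgue measure on `[-1,1]`: the pushforward
under `f̂` of Lebesgue measure restricted to `[-1,1]` equals Lebesgue measure restricted to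
`[-1,1]`. -/
theorem fhat_measurePreserving :
    Measure.map fhat (volume.restrict (Set.Icc (-1 : ℝ) 1)) =
      volume.restrict (Set.Icc (-1 : ℝ) 1) := by
  apply Measure.ext_of_Iic
  intro a
  rw [Measure.map_apply fhat_measurable measurableSet_Iic,
    Measure.restrict_apply (fhat_measurable measurableSet_Iic),
    Measure.restrict_apply measurableSet_Iic]
  rcases lt_or_ge a (-1) with h | h
  · have e1 : fhat ⁻¹' Set.Iic a ∩ Set.Icc (-1 : ℝ) 1 = ∅ := by
      ext x
      simp only [Set.mem_inter_iff, Set.mem_preimage, Set.mem_Iic, Set.mem_empty_iff_false,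
        iff_false, not_and]
      intro h1 h2
      linarith [(fhat_mem h2).1]
    have e2 : Set.Iic a ∩ Set.Icc (-1 : ℝ) 1 = ∅ := by
      ext x
      simp only [Set.mem_inter_iff, Set.mem_Iic, Set.mem_empty_iff_false, iff_false, not_and]
      intro h1 h2
      linarith [h2.1]
    rw [e1, e2]
  · rcases lt_or_ge a 1 with h' | h'
    · have e2 : Set.Iic a ∩ Set.Icc (-1 : ℝ) 1 = Set.Icc (-1) a := by
        ext x
        simp only [Set.mem_inter_iff, Set.mem_Iic, Set.mem_Icc]
        constructor
        · rintro ⟨h1, h2, -⟩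
          exact ⟨h2, h1⟩
        · rintro ⟨h1, h2⟩
          exact ⟨h2, h1, by linarith⟩
      have hc : 0 < ((1 - a) / 2) ^ 2 := by
        have : 0 < (1 - a) / 2 := by linarith
        positivity
      have hc1 : ((1 - a) / 2) ^ 2 ≤ 1 := by nlinarith
      rw [fhat_preimage h h', e2, measure_union _ measurableSet_Icc, Real.volume_Icc,
        Real.volume_Icc, Real.volume_Icc, ← ENNReal.ofReal_add (by linarith)
          (by rw [sub_zero]; positivity)]
      · congr 1
        ring
      · rw [Set.disjoint_left]
        rintro x ⟨_, h2⟩ ⟨h3, _⟩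
        linarith
    · congr 1
      rw [Set.inter_eq_right.mpr, Set.inter_eq_right.mpr]
      · exact fun x hx => hx.2.trans h'
      · exact fun x hx => (fhat_mem hx).2.trans h'
end

section
/- Let f̂ : ℝ → ℝ be the 2-periodic extension of the map given on [−1,1) by f̂(x) = 2√x − 1 for x ∈ [0,1) and f̂(x) = 1 − 2√(−x) for x ∈ [−1,0), and let f be the induced continuous map of the circle ℝ/2ℤ (well-defined since f̂(−1) ≡ f̂(1) mod 2). Then f is topologically mixing in the following sense: for every nonempty open subset U of ℝ/2ℤ there exists N ≥ 1 such that the image of U under the N-th iterate of f is the whole circle, f^N(U) = ℝ/2ℤ. -/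
/-- Some iterate of `f` maps `V` onto everything. -/
def Covers {X : Type*} (f : X → X) (V : Set X) : Prop :=
  ∃ N : ℕ, 1 ≤ N ∧ f^[N] '' V = Set.univ

theorem Covers.mono {X : Type*} {f : X → X} {V W : Set X} (h : Covers f V) (hVW : V ⊆ W) :
    Covers f W := by
  obtain ⟨N, hN, h⟩ := h
  exact ⟨N, hN, Set.univ_subset_iff.1 (h ▸ Set.image_mono hVW)⟩

theorem Covers.step {X : Type*} {f : X → X} {V W : Set X} (h : Covers f W) (hVW : W ⊆ f '' V) :
    Covers f V := by
  obtain ⟨N, hN, h⟩ := h.mono hVW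
  refine ⟨N + 1, by omega, ?_⟩
  rw [Function.iterate_succ, Set.image_comp, h]

/-- The image in the circle of the real interval `(a, b)`. -/
def arc (a b : ℝ) : Set (AddCircle (2 : ℝ)) := (fun x : ℝ => (x : AddCircle (2 : ℝ))) '' Set.Ioo a b

theorem arc_mono {a b a' b' : ℝ} (h : a' ≤ a) (h' : b ≤ b') : arc a b ⊆ arc a' b' :=
  Set.image_mono (Set.Ioo_subset_Ioo h h')

section
variable {fhat : ℝ → ℝ} {f : AddCircle (2 : ℝ) → AddCircle (2 : ℝ)}

theorem arc_pos
    (h1 : ∀ x ∈ Set.Ico (0 : ℝ) 1, fhat x = 2 * Real.sqrt x - 1)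
    (hf : ∀ x : ℝ, f (x : AddCircle (2 : ℝ)) = ((fhat x : ℝ) : AddCircle (2 : ℝ)))
    {s t : ℝ} (hs : 0 ≤ s) (ht : t ≤ 1) :
    arc (2 * s - 1) (2 * t - 1) ⊆ f '' arc (s ^ 2) (t ^ 2) := by
  rintro _ ⟨y, ⟨hy1, hy2⟩, rfl⟩
  have hz : 0 ≤ (y + 1) / 2 := by linarith
  refine ⟨_, ⟨((y + 1) / 2) ^ 2, ⟨by nlinarith, by nlinarith⟩, rfl⟩, ?_⟩
  simp only [hf]
  rw [h1 _ ⟨by positivity, by nlinarith⟩, Real.sqrt_sq hz]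
  congr 1; ring

theorem arc_neg
    (h2 : ∀ x ∈ Set.Ico (-1 : ℝ) 0, fhat x = 1 - 2 * Real.sqrt (-x))
    (hf : ∀ x : ℝ, f (x : AddCircle (2 : ℝ)) = ((fhat x : ℝ) : AddCircle (2 : ℝ)))
    {s t : ℝ} (ht : 0 ≤ t) (hs : s ≤ 1) :
    arc (1 - 2 * s) (1 - 2 * t) ⊆ f '' arc (-s ^ 2) (-t ^ 2) := by
  rintro _ ⟨y, ⟨hy1, hy2⟩, rfl⟩
  have hz : 0 < (1 - y) / 2 := by linarith
  refine ⟨_, ⟨-((1 - y) / 2) ^ 2, ⟨by nlinarith, by nlinarith⟩, rfl⟩, ?_⟩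
  simp only [hf]
  rw [h2 _ ⟨by nlinarith, by nlinarith⟩, neg_neg, Real.sqrt_sq hz.le]
  congr 1; ring

theorem exists_rep (u : AddCircle (2 : ℝ)) : ∃ x : ℝ, -1 ≤ x ∧ x < 1 ∧ (x : AddCircle (2 : ℝ)) = u := by
  haveI : Fact ((0 : ℝ) < 2) := ⟨by norm_num⟩
  have h := AddCircle.coe_image_Ico_eq (2 : ℝ) (-1)
  have hu : u ∈ ((↑) : ℝ → AddCircle (2 : ℝ)) '' Set.Ico (-1 : ℝ) (-1 + 2) := by rw [h]; trivial
  obtain ⟨x, ⟨hx1, hx2⟩, rfl⟩ := hu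
  exact ⟨x, hx1, by linarith, rfl⟩

theorem covers_base
    (h1 : ∀ x ∈ Set.Ico (0 : ℝ) 1, fhat x = 2 * Real.sqrt x - 1)
    (h2 : ∀ x ∈ Set.Ico (-1 : ℝ) 0, fhat x = 1 - 2 * Real.sqrt (-x))
    (hf : ∀ x : ℝ, f (x : AddCircle (2 : ℝ)) = ((fhat x : ℝ) : AddCircle (2 : ℝ)))
    {c : ℝ} (hc : 0 < c) : Covers f (arc (-1) c) := by
  refine ⟨1, le_rfl, Set.eq_univ_of_forall fun u => ?_⟩
  rw [Function.iterate_one]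
  obtain ⟨y, hy1, hy2, rfl⟩ := exists_rep u
  rcases hy1.eq_or_lt with rfl | hy1
  · refine ⟨_, ⟨0, ⟨by norm_num, hc⟩, rfl⟩, ?_⟩
    simp only [hf]
    rw [h1 0 ⟨le_rfl, by norm_num⟩]
    simp
  · have h := arc_neg h2 hf (s := 1) (t := 0) le_rfl le_rfl
    refine Set.image_mono (arc_mono ?_ ?_) (h ⟨y, ⟨by linarith, by linarith⟩, rfl⟩)
    · norm_num
    · simpa using hc.le

theorem covers_left
    (h1 : ∀ x ∈ Set.Ico (0 : ℝ) 1, fhat x = 2 * Real.sqrt x - 1)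
    (h2 : ∀ x ∈ Set.Ico (-1 : ℝ) 0, fhat x = 1 - 2 * Real.sqrt (-x))
    (hf : ∀ x : ℝ, f (x : AddCircle (2 : ℝ)) = ((fhat x : ℝ) : AddCircle (2 : ℝ)))
    {δ : ℝ} (hδ : 0 < δ) (n : ℕ) :
    ∀ c : ℝ, δ ≤ 1 + c → 1 < 1 + c + n * (δ ^ 2 / 4) → Covers f (arc (-1) c) := by
  induction n with
  | zero =>
    intro c _ hc
    exact covers_base h1 h2 hf (by simpa using hc)
  | succ n ih =>
    intro c hc hn
    rcases lt_or_ge 0 c with h | h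
    · exact covers_base h1 h2 hf h
    obtain ⟨t, ht, rfl⟩ : ∃ t : ℝ, 0 ≤ t ∧ c = -t ^ 2 :=
      ⟨√(-c), Real.sqrt_nonneg _, by rw [Real.sq_sqrt (by linarith)]; ring⟩
    have ht1 : t < 1 := by nlinarith
    have hA := arc_neg h2 hf (s := 1) ht le_rfl
    norm_num at hA
    have hd : δ ≤ 2 * (1 - t) := by nlinarith
    have hd2 : δ ^ 2 ≤ (2 * (1 - t)) ^ 2 := by gcongr
    push_cast at hn
    exact (ih (1 - 2 * t) (by linarith) (by nlinarith)).step hA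

theorem covers_arc
    (h1 : ∀ x ∈ Set.Ico (0 : ℝ) 1, fhat x = 2 * Real.sqrt x - 1)
    (h2 : ∀ x ∈ Set.Ico (-1 : ℝ) 0, fhat x = 1 - 2 * Real.sqrt (-x))
    (hf : ∀ x : ℝ, f (x : AddCircle (2 : ℝ)) = ((fhat x : ℝ) : AddCircle (2 : ℝ)))
    {δ : ℝ} (hδ : 0 < δ) (n : ℕ) :
    ∀ a b : ℝ, -1 ≤ a → b ≤ 1 → δ ≤ b - a → 1 < b - a + n * (δ ^ 2 / 4) →
      Covers f (arc a b) := by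
  have hzero : ∀ a b : ℝ, a < 0 → 0 < b → b ≤ 1 → Covers f (arc a b) := by
    intro a b ha hb hb1
    have ht : 0 < √b := Real.sqrt_pos.2 hb
    have ht1 : √b ≤ 1 := Real.sqrt_le_one.2 hb1
    have hA := arc_pos h1 hf (s := 0) le_rfl ht1
    rw [Real.sq_sqrt hb.le] at hA
    norm_num at hA
    have hpos : (0 : ℝ) < (2 * √b) ^ 2 / 4 := by positivity
    obtain ⟨n, hn⟩ := exists_nat_gt (1 / ((2 * √b) ^ 2 / 4))
    rw [div_lt_iff₀ hpos] at hn
    have hc := covers_left h1 h2 hf (δ := 2 * √b) (by positivity) n (2 * √b - 1) (by linarith)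
      (by linarith)
    exact (hc.step hA).mono (arc_mono ha.le le_rfl)
  induction n with
  | zero =>
    intro a b ha hb _ hn
    norm_num at hn
    exact hzero a b (by linarith) (by linarith) hb
  | succ n ih =>
    intro a b ha hb hab hn
    push_cast at hn
    rcases le_or_gt 0 a with h | h
    · obtain ⟨s, hs, rfl⟩ : ∃ s : ℝ, 0 ≤ s ∧ a = s ^ 2 :=
        ⟨√a, Real.sqrt_nonneg _, by rw [Real.sq_sqrt h]⟩
      obtain ⟨t, ht, rfl⟩ : ∃ t : ℝ, 0 ≤ t ∧ b = t ^ 2 :=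
        ⟨√b, Real.sqrt_nonneg _, by rw [Real.sq_sqrt (by linarith)]⟩
      have ht1 : t ≤ 1 := by nlinarith
      have hst : s < t := by nlinarith
      have hd : δ ≤ 2 * (t - s) := by nlinarith
      have hd2 : δ ^ 2 ≤ (2 * (t - s)) ^ 2 := by gcongr
      have hg : (t - s) * (t - s) ≤ (t - s) * (2 - s - t) :=
        mul_le_mul_of_nonneg_left (by linarith) (by linarith)
      exact (ih _ _ (by linarith) (by linarith) (by linarith) (by nlinarith)).step
        (arc_pos h1 hf hs ht1)
    rcases le_or_gt b 0 with h' | h'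
    · obtain ⟨s, hs, rfl⟩ : ∃ s : ℝ, 0 ≤ s ∧ a = -s ^ 2 :=
        ⟨√(-a), Real.sqrt_nonneg _, by rw [Real.sq_sqrt (by linarith)]; ring⟩
      obtain ⟨t, ht, rfl⟩ : ∃ t : ℝ, 0 ≤ t ∧ b = -t ^ 2 :=
        ⟨√(-b), Real.sqrt_nonneg _, by rw [Real.sq_sqrt (by linarith)]; ring⟩
      have hs1 : s ≤ 1 := by nlinarith
      have hst : t < s := by nlinarith
      have hd : δ ≤ 2 * (s - t) := by nlinarith
      have hd2 : δ ^ 2 ≤ (2 * (s - t)) ^ 2 := by gcongr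
      have hg : (s - t) * (s - t) ≤ (s - t) * (2 - s - t) :=
        mul_le_mul_of_nonneg_left (by linarith) (by linarith)
      exact (ih _ _ (by linarith) (by linarith) (by linarith) (by nlinarith)).step
        (arc_neg h2 hf ht hs1)
    · exact hzero a b h h' hb

end

/-- Let `f̂ : ℝ → ℝ` be the 2-periodic extension of the map given on
`[-1,1)` by `f̂(x) = 2√x - 1` for `x ∈ [0,1)` and `f̂(x) = 1 - 2√(-x)` for `x ∈ [-1,0)`, and
let `f` be the induced continuous map of the circle `ℝ/2ℤ`. Then `f` is topologically mixing
in the sense that every nonempty open subset `U` of `ℝ/2ℤ` has some iterate covering the whole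
circle: there is `N ≥ 1` with `f^N(U) = ℝ/2ℤ`. -/
theorem fhat_circle_topologically_mixing
    (fhat : ℝ → ℝ)
    (h1 : ∀ x ∈ Set.Ico (0 : ℝ) 1, fhat x = 2 * Real.sqrt x - 1)
    (h2 : ∀ x ∈ Set.Ico (-1 : ℝ) 0, fhat x = 1 - 2 * Real.sqrt (-x))
    (hper : ∀ x : ℝ, fhat (x + 2) = fhat x)
    (f : AddCircle (2 : ℝ) → AddCircle (2 : ℝ))
    (hf : ∀ x : ℝ, f (x : AddCircle (2 : ℝ)) = ((fhat x : ℝ) : AddCircle (2 : ℝ))) :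
    ∀ U : Set (AddCircle (2 : ℝ)), IsOpen U → U.Nonempty →
      ∃ N : ℕ, 1 ≤ N ∧ f^[N] '' U = Set.univ := by
  intro U hU hne
  obtain ⟨u, hu⟩ := hne
  obtain ⟨x, hx1, hx2, rfl⟩ := exists_rep u
  have hop : IsOpen ((fun y : ℝ => (y : AddCircle (2 : ℝ))) ⁻¹' U) :=
    hU.preimage (AddCircle.continuous_mk' 2)
  obtain ⟨ε, hε, hball⟩ := Metric.isOpen_iff.1 hop x hu
  have hδ : 0 < min (x + ε) 1 - x := by
    have : x < min (x + ε) 1 := lt_min (by linarith) hx2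
    linarith
  have hpos : (0 : ℝ) < (min (x + ε) 1 - x) ^ 2 / 4 := by positivity
  obtain ⟨n, hn⟩ := exists_nat_gt (1 / ((min (x + ε) 1 - x) ^ 2 / 4))
  rw [div_lt_iff₀ hpos] at hn
  have hc := covers_arc h1 h2 hf hδ n x (min (x + ε) 1) hx1 (min_le_right _ _) le_rfl
    (by linarith)
  refine hc.mono ?_
  rintro _ ⟨y, ⟨hy1, hy2⟩, rfl⟩
  refine hball ?_
  have := lt_of_lt_of_le hy2 (min_le_left _ _)
  rw [Metric.mem_ball, Real.dist_eq, abs_lt]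
  constructor <;> linarith
end

section
/- Let (x_n)_{n≥1} be a sequence of real numbers with x₁ ∈ (0, 1/2) and x_{n+1} = (1 + x_n)²/4 for all n ≥ 1. Then 0 ≤ x_n ≤ 1 − 1/(2n) for every n ≥ 1. -/
/-- If `x₁ ∈ (0, 1/2)` and `x_{n+1} = (1 + x_n)²/4` for all `n ≥ 1`, then
`0 ≤ x_n ≤ 1 - 1/(2n)` for every `n ≥ 1`. -/
theorem seq_le_one_sub_inv_two_mul
    (x : ℕ → ℝ) (hx1 : x 1 ∈ Set.Ioo (0 : ℝ) (1 / 2))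
    (hrec : ∀ n ≥ 1, x (n + 1) = (1 + x n) ^ 2 / 4) :
    ∀ n ≥ 1, 0 ≤ x n ∧ x n ≤ 1 - 1 / (2 * n) := by
  intro n hn
  induction n, hn using Nat.le_induction with
  | base =>
    obtain ⟨h0, h1⟩ := hx1
    refine ⟨h0.le, ?_⟩
    norm_num
    linarith
  | succ n hn ih =>
    obtain ⟨h0, h1⟩ := ih
    rw [hrec n hn]
    refine ⟨by positivity, ?_⟩
    have hn' : (1 : ℝ) ≤ n := by exact_mod_cast hn
    have hpos : (0 : ℝ) < n := by linarith
    have key : (1 + (1 - 1 / (2 * (n : ℝ)))) ^ 2 / 4 ≤ 1 - 1 / (2 * ((n : ℝ) + 1)) := by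
      have e : 1 - 1 / (2 * ((n : ℝ) + 1)) - (1 + (1 - 1 / (2 * (n : ℝ)))) ^ 2 / 4
          = (7 * n - 1) / (16 * n ^ 2 * (n + 1)) := by
        field_simp
        ring
      have : (0 : ℝ) ≤ (7 * n - 1) / (16 * n ^ 2 * (n + 1)) :=
        div_nonneg (by linarith) (by positivity)
      linarith
    have step : (1 + x n) ^ 2 / 4 ≤ (1 + (1 - 1 / (2 * (n : ℝ)))) ^ 2 / 4 := by
      gcongr
    push_cast
    exact step.trans key
end

section
/- Let (x_n)_{n≥1} be a sequence of real numbers with x₁ ∈ (0, 1/2) and x_{n+1} = (1 + x_n)²/4 for all n ≥ 1. Then x_{n+1} − x_n = (1 − x_n)²/4 ≥ 1/(16n²) for every n ≥ 1. -/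
/-- If `x₁ ∈ (0, 1/2)` and `x_{n+1} = (1 + x_n)²/4` for all `n ≥ 1`, then
`x_{n+1} - x_n = (1 - x_n)²/4 ≥ 1/(16n²)` for every `n ≥ 1`. -/
theorem seq_diff_eq_and_ge
    (x : ℕ → ℝ) (hx1 : x 1 ∈ Set.Ioo (0 : ℝ) (1 / 2))
    (hrec : ∀ n ≥ 1, x (n + 1) = (1 + x n) ^ 2 / 4) :
    ∀ n ≥ 1, x (n + 1) - x n = (1 - x n) ^ 2 / 4 ∧
      1 / (16 * (n : ℝ) ^ 2) ≤ (1 - x n) ^ 2 / 4 := by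
  have key : ∀ n ≥ 1, 0 ≤ x n ∧ x n ≤ 1 - 1 / (2 * (n : ℝ)) := by
    intro n hn
    induction n, hn using Nat.le_induction with
    | base =>
      obtain ⟨h1, h2⟩ := hx1
      refine ⟨h1.le, ?_⟩
      norm_num at h2 ⊢
      linarith
    | succ n hn ih =>
      obtain ⟨h0, h1⟩ := ih
      have hn' : (1 : ℝ) ≤ n := by exact_mod_cast hn
      rw [hrec n hn]
      refine ⟨by positivity, ?_⟩
      have h2 : (1 + x n) ^ 2 ≤ (1 + (1 - 1 / (2 * (n : ℝ)))) ^ 2 := by gcongr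
      have h3 : 1 - 1 / (2 * ((n : ℝ) + 1)) - (1 + (1 - 1 / (2 * (n : ℝ)))) ^ 2 / 4
          = (7 * n - 1) / (16 * (n : ℝ) ^ 2 * (n + 1)) := by
        field_simp
        ring
      have h4 : 0 ≤ (7 * (n : ℝ) - 1) / (16 * (n : ℝ) ^ 2 * (n + 1)) :=
        div_nonneg (by linarith) (by positivity)
      push_cast
      linarith
  intro n hn
  obtain ⟨h0, h1⟩ := key n hn
  refine ⟨by rw [hrec n hn]; ring, ?_⟩
  have hn' : (1 : ℝ) ≤ n := by exact_mod_cast hn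
  have h2 : (1 / (2 * (n : ℝ))) ^ 2 ≤ (1 - x n) ^ 2 := by
    gcongr
    linarith
  have h3 : 1 / (16 * (n : ℝ) ^ 2) = (1 / (2 * (n : ℝ))) ^ 2 / 4 := by
    field_simp
    norm_num
  rw [h3]
  linarith
end

section
/- Let f̂ : [−1,1] → [−1,1] be defined by f̂(x) = 2√x − 1 for x ∈ [0,1] and f̂(x) = 1 − 2√(−x) for x ∈ [−1,0). Fix ε ∈ (0, 1/2) and define the first entry time τ_ε(x) = inf{ n ≥ 0 : |f̂ⁿ(x)| < ε } ∈ ℕ ∪ {∞}. Then the (lower Lebesgue) integral of τ_ε over [−1,1] with respect to Lebesgue measure is infinite; in particular τ_ε is not Lebesgue integrable. -/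
open MeasureTheory ENNReal

/-- The first entry time `τ_ε(x) = inf {n ≥ 0 : |f̂ⁿ(x)| < ε}`, with value `∞` (in `ℝ≥0∞`)
if the orbit of `x` never enters `(-ε, ε)`. -/
noncomputable def entryTime (ε : ℝ) (x : ℝ) : ℝ≥0∞ :=
  sInf ((fun n : ℕ => (n : ℝ≥0∞)) '' {n : ℕ | |fhat^[n] x| < ε})

lemma fhat_iter_ge (n : ℕ) : ∀ x : ℝ, 0 ≤ x → x ≤ 1 → (1 - x) * (n + 2) ≤ 1 →
    1 / 2 ≤ fhat^[n] x := by
  induction n with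
  | zero =>
    intro x h0 h1 h
    simp at h ⊢
    linarith
  | succ n ih =>
    intro x h0 h1 h
    rw [Function.iterate_succ_apply]
    have hs0 := Real.sqrt_nonneg x
    have hs2 := Real.sq_sqrt h0
    have hs1 : Real.sqrt x ≤ 1 := Real.sqrt_le_one.mpr h1
    have hf : fhat x = 2 * Real.sqrt x - 1 := by simp [fhat, h0]
    rw [hf]
    push_cast at h
    set s := Real.sqrt x
    have hn : (0 : ℝ) ≤ n := Nat.cast_nonneg n
    rw [← hs2] at h
    have hss : s ^ 2 ≤ s := by nlinarith
    have h3 : (1 - s) * (n + 3) ≤ 1 := by nlinarith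
    have hhalf : 1 / 2 ≤ s := by nlinarith
    have h4 : 2 * ((n : ℝ) + 2) ≤ (n + 3) * (1 + s) := by nlinarith
    apply ih
    · linarith
    · linarith
    · nlinarith [mul_le_mul_of_nonneg_left h4 (sub_nonneg.mpr hs1)]

lemma entryTime_add_ge (ε : ℝ) (hε : ε < 1 / 2) (x : ℝ) (hx : x ∈ Set.Ioc (0 : ℝ) 1) :
    ENNReal.ofReal ((1 - x)⁻¹) ≤ entryTime ε x + 2 := by
  rcases hx.2.eq_or_lt with rfl | hx1
  · simp
  rw [← tsub_le_iff_right]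
  apply le_sInf
  rintro _ ⟨n, hn, rfl⟩
  rw [tsub_le_iff_right]
  have : (1 - x)⁻¹ ≤ ((n + 2 : ℕ) : ℝ) := by
    by_contra! hc
    have hpos : 0 < 1 - x := by linarith
    have h1 : (1 - x) * ((n : ℝ) + 2) ≤ 1 := by
      have := mul_le_mul_of_nonneg_left hc.le hpos.le
      rw [mul_inv_cancel₀ hpos.ne'] at this
      push_cast at this
      exact this
    have h2 := fhat_iter_ge n x hx.1.le hx.2 h1
    have h3 := (abs_lt.mp (show |fhat^[n] x| < ε from hn)).2
    linarith
  calc ENNReal.ofReal ((1 - x)⁻¹) ≤ ENNReal.ofReal ((n + 2 : ℕ) : ℝ) :=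
        ENNReal.ofReal_le_ofReal this
    _ = (n : ℝ≥0∞) + 2 := by rw [ENNReal.ofReal_natCast]; push_cast; rfl

lemma lintegral_inv_top : ∫⁻ x in Set.Ioc (0 : ℝ) 1, ENNReal.ofReal ((1 - x)⁻¹) = ⊤ := by
  by_contra hne
  have hm : Measurable (fun x : ℝ => (1 - x)⁻¹) := by fun_prop
  have hint : IntegrableOn (fun x : ℝ => (1 - x)⁻¹) (Set.Ioc 0 1) := by
    refine ⟨hm.aestronglyMeasurable, ?_⟩
    rw [hasFiniteIntegral_iff_ofReal]
    · exact lt_top_iff_ne_top.mpr hne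
    · filter_upwards [ae_restrict_mem measurableSet_Ioc] with x hx
      exact inv_nonneg.mpr (sub_nonneg.mpr hx.2)
  have h2 : IntervalIntegrable (fun x : ℝ => (x - 1)⁻¹) volume 0 1 := by
    rw [intervalIntegrable_iff_integrableOn_Ioc_of_le zero_le_one]
    have := hint.neg
    refine this.congr (Filter.Eventually.of_forall fun x => ?_)
    simp only [Pi.neg_apply]
    rw [← inv_neg, neg_sub]
  rw [intervalIntegrable_sub_inv_iff] at h2
  simp at h2

/-- For any `ε ∈ (0, 1/2)`, the (lower Lebesgue) integral over `[-1,1]` of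
the first entry time `τ_ε` into `(-ε, ε)` is infinite; in particular `τ_ε` is not Lebesgue
integrable. -/
theorem entryTime_lintegral_eq_top (ε : ℝ) (hε0 : 0 < ε) (hε : ε < 1 / 2) :
    ∫⁻ x in Set.Icc (-1 : ℝ) 1, entryTime ε x = ⊤ := by
  have h1 : (⊤ : ℝ≥0∞) ≤ ∫⁻ x in Set.Ioc (0 : ℝ) 1, (entryTime ε x + 2) := by
    rw [← lintegral_inv_top]
    exact setLIntegral_mono' measurableSet_Ioc (entryTime_add_ge ε hε)
  rw [lintegral_add_right _ measurable_const, top_le_iff, ENNReal.add_eq_top] at h1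
  rcases h1 with h1 | h1
  · rw [← top_le_iff, ← h1]
    apply lintegral_mono_set
    intro x hx
    exact ⟨by linarith [hx.1], hx.2⟩
  · simp at h1
end
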